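/- Let μ ∈ M(0,1) with orthonormal polynomials l_n. Then for every fixed integer ν, the functions z ↦ ∫ l_{n+ν}(x) l_n(x)/(z−x) dμ(x) converge, as n → ∞, to 1/(φ(z)^{|ν|}·√(z²−1)) uniformly on every compact subset of ℂ̄∖S_μ. -/

import Mathlib

open MeasureTheory Polynomial Filter Topology Set
open scoped Classical

/-- The branch of `√(z²-1)` on `ℂ ∖ [-1,1]` that is positive for `z > 1`. -/
noncomputable def sqrtB (z : ℂ) : ℂ := z * (1 - 1 / z ^ 2) ^ ((1 : ℂ) / 2)

/-- `φ(z) = z + √(z²-1)`, the conformal map of `ℂ ∖ [-1,1]` onto the exterior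
of the closed unit disk. -/
noncomputable def phi (z : ℂ) : ℂ := z + sqrtB z

/-- The support of a measure on `ℝ`: points all of whose neighborhoods have
positive measure. -/
def msupp (μ : Measure ℝ) : Set ℝ := {x | ∀ U ∈ nhds x, μ U ≠ 0}

/-- The support `S_μ`, viewed as a subset of `ℂ`. -/
def msuppC (μ : Measure ℝ) : Set ℂ := Complex.ofReal '' msupp μ

/-- `l` is the sequence of orthonormal polynomials of the measure `μ`:
degree `n`, positive leading coefficient, `∫ l_m l_n dμ = δ_{mn}`. -/
structure IsOrthonormalPolys (μ : Measure ℝ) (l : ℕ → Polynomial ℝ) : Prop where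
  natDegree_eq : ∀ n, (l n).natDegree = n
  leadingCoeff_pos : ∀ n, 0 < (l n).leadingCoeff
  orthonormal : ∀ m n, ∫ x, (l m).eval x * (l n).eval x ∂μ = if m = n then 1 else 0

/-- `μ ∈ M(0,1)`: the recurrence coefficients of the orthonormal polynomials
`l_n` satisfy `a_n → 1/2`, `b_n → 0`, where
`x·l_n = a_{n+1} l_{n+1} + b_n l_n + a_n l_{n-1}`. -/
structure IsM01 (μ : Measure ℝ) (l : ℕ → Polynomial ℝ) (a b : ℕ → ℝ) : Prop where
  onp : IsOrthonormalPolys μ l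
  recurrence_zero : X * l 0 = a 1 • l 1 + b 0 • l 0
  recurrence : ∀ n : ℕ,
    X * l (n + 1) = a (n + 2) • l (n + 2) + b (n + 1) • l (n + 1) + a (n + 1) • l n
  tendsto_a : Tendsto a atTop (nhds (1 / 2))
  tendsto_b : Tendsto b atTop (nhds 0)

lemma halfpow_sq (u : ℂ) : (u ^ ((1:ℂ)/2)) ^ 2 = u := by
  have := Complex.cpow_nat_inv_pow u (n := 2) (by norm_num)
  rw [one_div]; exact this

lemma halfpow_re (u : ℂ) : 0 ≤ (u ^ ((1:ℂ)/2)).re := by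
  by_cases hu : u = 0
  · subst hu; simp
  · rw [Complex.cpow_def_of_ne_zero hu, Complex.exp_re]
    have him : (Complex.log u * (1/2)).im = u.arg / 2 := by
      have : (1/2 : ℂ) = ((1/2 : ℝ) : ℂ) := by push_cast; rfl
      rw [this, Complex.im_mul_ofReal, Complex.log_im]; ring
    rw [him]
    apply mul_nonneg (Real.exp_pos _).le
    apply Real.cos_nonneg_of_mem_Icc
    have h1 := Complex.neg_pi_lt_arg u
    have h2 := Complex.arg_le_pi u
    constructor <;> linarith

lemma sqrtB_sq {z : ℂ} (hz : z ≠ 0) : sqrtB z ^ 2 = z ^ 2 - 1 := by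
  unfold sqrtB
  rw [mul_pow, halfpow_sq]; field_simp

lemma phi_mul {z : ℂ} (hz : z ≠ 0) : phi z * (z - sqrtB z) = 1 := by
  have := sqrtB_sq hz
  unfold phi; linear_combination -this

lemma phi_ne {z : ℂ} (hz : z ≠ 0) : phi z ≠ 0 := left_ne_zero_of_mul_eq_one (phi_mul hz)

lemma phi_inv {z : ℂ} (hz : z ≠ 0) : (phi z)⁻¹ = z - sqrtB z :=
  inv_eq_of_mul_eq_one_right (phi_mul hz)

lemma one_le_phi {z : ℂ} (hz : z ≠ 0) : 1 ≤ ‖phi z‖ := by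
  have h := congrArg norm (phi_mul hz)
  rw [norm_mul, norm_one] at h
  have h2 : ‖z - sqrtB z‖ ≤ ‖phi z‖ := by
    have e1 : z - sqrtB z = z * (1 - (1 - 1 / z ^ 2) ^ ((1 : ℂ) / 2)) := by unfold sqrtB; ring
    have e2 : phi z = z * (1 + (1 - 1 / z ^ 2) ^ ((1 : ℂ) / 2)) := by unfold phi sqrtB; ring
    rw [e1, e2, norm_mul, norm_mul]
    apply mul_le_mul_of_nonneg_left _ (norm_nonneg _)
    have := halfpow_re (1 - 1 / z ^ 2)
    set s := (1 - 1 / z ^ 2) ^ ((1 : ℂ) / 2)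
    rw [← sq_le_sq₀ (norm_nonneg _) (norm_nonneg _), Complex.sq_norm, Complex.sq_norm,
      Complex.normSq_apply, Complex.normSq_apply]
    simp
    nlinarith
  nlinarith [norm_nonneg (phi z), norm_nonneg (z - sqrtB z)]

lemma slit_of_phi {z : ℂ} (hz : z ≠ 0) (hp : 1 < ‖phi z‖) : 1 - 1 / z ^ 2 ∈ Complex.slitPlane := by
  by_contra hs
  have h := congrArg norm (phi_mul hz)
  rw [norm_mul, norm_one] at h
  have h2 : ‖z - sqrtB z‖ = ‖phi z‖ := by
    have e1 : z - sqrtB z = z * (1 - (1 - 1 / z ^ 2) ^ ((1 : ℂ) / 2)) := by unfold sqrtB; ring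
    have e2 : phi z = z * (1 + (1 - 1 / z ^ 2) ^ ((1 : ℂ) / 2)) := by unfold phi sqrtB; ring
    rw [e1, e2, norm_mul, norm_mul]
    congr 1
    have hsq := halfpow_sq (1 - 1 / z ^ 2)
    set s := (1 - 1 / z ^ 2) ^ ((1 : ℂ) / 2)
    have hre : s.re = 0 := by
      rw [← hsq, Complex.mem_slitPlane_iff] at hs
      push Not at hs
      obtain ⟨h1, h2⟩ := hs
      simp [pow_two] at h1 h2
      have : s.re * s.im = 0 := by linarith
      rcases mul_eq_zero.1 this with h | h
      · exact h
      · rw [h] at h1; nlinarith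
    rw [← sq_eq_sq₀ (norm_nonneg _) (norm_nonneg _), Complex.sq_norm, Complex.sq_norm,
      Complex.normSq_apply, Complex.normSq_apply]
    simp [hre]
  rw [h2] at h
  nlinarith

lemma sqrtB_cont {z : ℂ} (hz : z ≠ 0) (hp : 1 < ‖phi z‖) : ContinuousAt sqrtB z := by
  unfold sqrtB
  have h1 : ContinuousAt (fun z : ℂ => 1 - 1 / z ^ 2) z := by
    apply ContinuousAt.sub continuousAt_const
    exact ContinuousAt.div continuousAt_const (by fun_prop) (pow_ne_zero _ hz)
  exact continuousAt_id.mul (h1.cpow continuousAt_const (slit_of_phi hz hp))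

lemma geom_sol {z w : ℂ} (hw : w ≠ 0) (hw1 : 1 ≤ ‖w‖) (hzw : w + w⁻¹ = 2 * z) (g : ℕ → ℂ)
    (hg : Tendsto g atTop (𝓝 0)) (hr : ∀ k, g (k+2) + g k = 2 * z * g (k+1)) :
    ∀ k, g k = (w⁻¹)^k * g 0 := by
  have hh : ∀ k, g (k+1) - w⁻¹ * g k = w ^ k * (g 1 - w⁻¹ * g 0) := by
    intro k
    induction k with
    | zero => simp
    | succ k ih =>
      rw [pow_succ', mul_assoc, ← ih, show k + 1 + 1 = k + 2 from rfl, eq_sub_of_add_eq (hr k), ← hzw]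
      field_simp
      ring
  have h0 : g 1 - w⁻¹ * g 0 = 0 := by
    have ht : Tendsto (fun k => ‖g (k+1) - w⁻¹ * g k‖) atTop (𝓝 0) := by
      have h1 : Tendsto (fun k => g (k+1) - w⁻¹ * g k) atTop (𝓝 (0 - w⁻¹ * 0)) :=
        (hg.comp (tendsto_add_atTop_nat 1)).sub (hg.const_mul w⁻¹)
      simpa using h1.norm
    have : ‖g 1 - w⁻¹ * g 0‖ ≤ 0 := by
      apply ge_of_tendsto' ht
      intro k
      rw [hh k, norm_mul, norm_pow]
      exact le_mul_of_one_le_left (norm_nonneg (g 1 - w⁻¹ * g 0)) (one_le_pow₀ hw1)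
    simpa using this
  intro k
  induction k with
  | zero => simp
  | succ k ih =>
    have := hh k
    rw [h0, mul_zero, ih] at this
    rw [pow_succ']; linear_combination this

lemma green {z w : ℂ} (hw : w ≠ 0) (hw1 : 1 ≤ ‖w‖) (hzw : w + w⁻¹ = 2 * z) (g : ℤ → ℂ)
    (hg : Tendsto g cofinite (𝓝 0))
    (hr : ∀ k, z * g k - (g (k+1) + g (k-1)) / 2 = if k = 0 then 1 else 0) :
    1 < ‖w‖ ∧ g 0 * (z - w⁻¹) = 1 ∧ ∀ k : ℤ, g k = (w⁻¹)^k.natAbs * g 0 := by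
  have hpos : ∀ k : ℕ, g k = (w⁻¹)^k * g 0 := by
    have := geom_sol hw hw1 hzw (fun k : ℕ => g k) (by
      rw [← Nat.cofinite_eq_atTop]
      exact hg.comp (Nat.cast_injective.tendsto_cofinite)) (by
      intro k
      have := hr (k+1)
      rw [if_neg (by omega)] at this
      push_cast
      rw [show (k:ℤ)+1+1 = k+2 by ring, show (k:ℤ)+1-1 = k by ring] at this
      linear_combination -2 * this)
    simpa using this
  have hneg : ∀ k : ℕ, g (-k) = (w⁻¹)^k * g 0 := by
    have := geom_sol hw hw1 hzw (fun k : ℕ => g (-k)) (by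
      rw [← Nat.cofinite_eq_atTop]
      exact hg.comp ((neg_injective.comp Nat.cast_injective).tendsto_cofinite)) (by
      intro k
      have := hr (-(k+1))
      rw [if_neg (by omega)] at this
      push_cast
      rw [show -((k:ℤ)+1)+1 = -k by ring, show -((k:ℤ)+1)-1 = -(k+2) by ring] at this
      linear_combination -2 * this)
    simpa using this
  have h1 : g 0 * (z - w⁻¹) = 1 := by
    have := hr 0
    have a := hpos 1
    have b := hneg 1
    simp at this a b
    rw [a, b] at this
    linear_combination this
  refine ⟨?_, h1, ?_⟩
  · rcases hw1.lt_or_eq with h | h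
    · exact h
    · exfalso
      have h0 : g 0 = 0 := by
        have ht : Tendsto (fun k : ℕ => ‖g k‖) atTop (𝓝 0) := by
          rw [← Nat.cofinite_eq_atTop]
          simpa using (hg.comp (Nat.cast_injective.tendsto_cofinite)).norm
        have : ‖g 0‖ ≤ 0 := by
          apply ge_of_tendsto' ht
          intro k
          rw [hpos k]; simp [← h]
        simpa using this
      rw [h0] at h1; simp at h1
  · intro k
    obtain ⟨m, rfl | rfl⟩ := Int.eq_nat_or_neg k
    · rw [hpos]; simp
    · rw [hneg]; simp

lemma msupp_eq (μ : Measure ℝ) : msupp μ = μ.support := by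
  ext x
  rw [Measure.mem_support_iff_forall]
  simp [msupp, pos_iff_ne_zero]

lemma ae_msupp (μ : Measure ℝ) : ∀ᵐ x ∂μ, x ∈ msupp μ := by
  rw [msupp_eq]; exact Measure.support_mem_ae

lemma memLp_quot {μ : Measure ℝ} [IsFiniteMeasure μ] (hc : IsCompact (msupp μ)) (p : Polynomial ℝ)
    (z : ℂ) (d : ℝ) (hd : 0 < d) (hz : ∀ x ∈ msupp μ, d ≤ ‖z - (x : ℂ)‖) (q : ENNReal) :
    MemLp (fun x : ℝ => ((p.eval x : ℝ) : ℂ) / (z - x)) q μ := by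
  obtain ⟨M, hM⟩ := hc.exists_bound_of_continuousOn (f := fun x => p.eval x) p.continuous.continuousOn
  apply MemLp.of_bound (C := M / d)
  · apply Measurable.aestronglyMeasurable
    have := p.continuous.measurable
    fun_prop
  · filter_upwards [ae_msupp μ] with x hx
    rw [norm_div]
    have h1 := hM x hx
    have h0 : 0 ≤ M := (norm_nonneg _).trans h1
    apply div_le_div₀ h0 _ hd (hz x hx)
    simpa using h1

lemma memLp_poly {μ : Measure ℝ} [IsFiniteMeasure μ] (hc : IsCompact (msupp μ)) (p : Polynomial ℝ)
    (q : ENNReal) :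
    MemLp (fun x : ℝ => ((p.eval x : ℝ) : ℂ)) q μ := by
  obtain ⟨M, hM⟩ := hc.exists_bound_of_continuousOn (f := fun x => p.eval x) p.continuous.continuousOn
  apply MemLp.of_bound (C := M)
  · apply Measurable.aestronglyMeasurable
    have := p.continuous.measurable
    fun_prop
  · filter_upwards [ae_msupp μ] with x hx
    simpa using hM x hx

/-- The Cauchy transform of `l_m l_n`. -/
noncomputable def gC (μ : Measure ℝ) (l : ℕ → Polynomial ℝ) (m n : ℕ) (z : ℂ) : ℂ :=
  ∫ x, ((((l m).eval x * (l n).eval x : ℝ) : ℂ) / (z - x)) ∂μ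

lemma bessel {μ : Measure ℝ} [IsFiniteMeasure μ] (hc : IsCompact (msupp μ)) {l : ℕ → Polynomial ℝ}
    (hl : IsOrthonormalPolys μ l) (n : ℕ)
    (z : ℂ) (d : ℝ) (hd : 0 < d) (hz : ∀ x ∈ msupp μ, d ≤ ‖z - (x : ℂ)‖) (s : Finset ℕ) :
    ∑ m ∈ s, ‖gC μ l m n z‖ ^ 2 ≤ (1 / d) ^ 2 := by
  let v : ℕ → Lp ℂ 2 μ := fun k => (memLp_poly hc (l k) 2).toLp
  let f : Lp ℂ 2 μ := (memLp_quot hc (l n) z d hd hz 2).toLp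
  have hintg : ∀ k, Integrable (fun x => (l k).eval x * (l k).eval x) μ := by
    intro k
    have := (memLp_poly hc (l k * l k) 1).integrable le_rfl
    simpa using this.re
  have hv : Orthonormal ℂ v := by
    rw [orthonormal_iff_ite]
    intro i j
    rw [L2.inner_def]
    have : ∫ x, inner ℂ ((v i : ℝ → ℂ) x) ((v j : ℝ → ℂ) x) ∂μ
        = ∫ x, (((l i).eval x * (l j).eval x : ℝ) : ℂ) ∂μ := by
      apply integral_congr_ae
      filter_upwards [(memLp_poly hc (l i) 2).coeFn_toLp, (memLp_poly hc (l j) 2).coeFn_toLp]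
        with x h1 h2
      simp only [v]
      rw [h1, h2, RCLike.inner_apply]
      simp [mul_comm]
    rw [this, integral_complex_ofReal, hl.orthonormal]
    split_ifs <;> simp
  have hg : ∀ m, inner ℂ (v m) f = gC μ l m n z := by
    intro m
    rw [L2.inner_def, gC]
    apply integral_congr_ae
    filter_upwards [(memLp_poly hc (l m) 2).coeFn_toLp,
      (memLp_quot hc (l n) z d hd hz 2).coeFn_toLp] with x h1 h2
    simp only [v, f]
    rw [h1, h2, RCLike.inner_apply]
    simp; ring
  have hf : ‖f‖ ^ 2 ≤ (1 / d) ^ 2 := by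
    have h1 : ((‖f‖ ^ 2 : ℝ) : ℂ) = ((∫ x, ‖(((l n).eval x : ℝ) : ℂ) / (z - x)‖ ^ 2 ∂μ : ℝ) : ℂ) := by
      have := inner_self_eq_norm_sq_to_K (𝕜 := ℂ) f
      push_cast
      simp only [Complex.coe_algebraMap] at this
      rw [← this, L2.inner_def, ← integral_complex_ofReal]
      apply integral_congr_ae
      filter_upwards [(memLp_quot hc (l n) z d hd hz 2).coeFn_toLp] with x h2
      simp only [f]
      rw [h2, inner_self_eq_norm_sq_to_K]
      simp
    rw [Complex.ofReal_inj.1 h1]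
    calc _ ≤ ∫ x, (1/d)^2 * ((l n).eval x * (l n).eval x) ∂μ := by
          apply integral_mono_of_nonneg
          · exact Eventually.of_forall fun x => by positivity
          · exact (hintg n).const_mul _
          · filter_upwards [ae_msupp μ] with x hx
            rw [norm_div, div_pow, div_pow, one_pow, Complex.norm_real, Real.norm_eq_abs, sq_abs,
              one_div, ← sq, inv_mul_eq_div]
            exact div_le_div_of_nonneg_left (sq_nonneg _) (by positivity)
              (pow_le_pow_left₀ hd.le (hz x hx) 2)
      _ = _ := by rw [integral_const_mul, hl.orthonormal]; simp
  calc _ = ∑ m ∈ s, ‖inner ℂ (v m) f‖ ^ 2 := by simp_rw [hg]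
    _ ≤ ‖f‖ ^ 2 := hv.sum_inner_products_le f
    _ ≤ _ := hf

lemma gC_bound {μ : Measure ℝ} [IsFiniteMeasure μ] (hc : IsCompact (msupp μ)) {l : ℕ → Polynomial ℝ}
    (hl : IsOrthonormalPolys μ l) (m n : ℕ)
    (z : ℂ) (d : ℝ) (hd : 0 < d) (hz : ∀ x ∈ msupp μ, d ≤ ‖z - (x : ℂ)‖) :
    ‖gC μ l m n z‖ ≤ 1 / d := by
  have := bessel hc hl n z d hd hz {m}
  rw [Finset.sum_singleton] at this
  exact (sq_le_sq₀ (norm_nonneg _) (by positivity)).1 this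

lemma gC_rec {μ : Measure ℝ} [IsFiniteMeasure μ] (hc : IsCompact (msupp μ)) {l : ℕ → Polynomial ℝ}
    {a b : ℕ → ℝ} (hl : IsM01 μ l a b) (m n : ℕ)
    (z : ℂ) (d : ℝ) (hd : 0 < d) (hz : ∀ x ∈ msupp μ, d ≤ ‖z - (x : ℂ)‖) :
    z * gC μ l (m+1) n z - (a (m+2) * gC μ l (m+2) n z + b (m+1) * gC μ l (m+1) n z
      + a (m+1) * gC μ l m n z) = if m + 1 = n then 1 else 0 := by
  have hi : ∀ k, Integrable
      (fun x : ℝ => (((l k).eval x * (l n).eval x : ℝ) : ℂ) / (z - x)) μ := by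
    intro k
    have := (memLp_quot hc (l k * l n) z d hd hz 1).integrable le_rfl
    simpa using this
  have key : ((if m + 1 = n then 1 else 0 : ℝ) : ℂ)
      = ∫ x, (((l (m+1)).eval x * (l n).eval x : ℝ) : ℂ) ∂μ := by
    rw [integral_complex_ofReal, hl.onp.orthonormal]
  have e : (if m + 1 = n then (1:ℂ) else 0) = ((if m + 1 = n then 1 else 0 : ℝ) : ℂ) := by
    split_ifs <;> simp
  rw [e, key]
  unfold gC
  rw [← integral_const_mul, ← integral_const_mul, ← integral_const_mul, ← integral_const_mul,
    ← integral_add, ← integral_add, ← integral_sub]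
  · apply integral_congr_ae
    filter_upwards [ae_msupp μ] with x hx
    have hne : z - (x:ℂ) ≠ 0 := by
      rw [← norm_pos_iff]; exact hd.trans_le (hz x hx)
    have hr := congrArg (fun p => ((p.eval x : ℝ) : ℂ)) (hl.recurrence m)
    simp only [eval_mul, eval_X, eval_add, eval_smul, smul_eq_mul] at hr
    push_cast at hr ⊢
    field_simp
    linear_combination (((l n).eval x : ℝ) : ℂ) * hr
  all_goals first
    | exact (hi _).const_mul _
    | exact ((hi _).const_mul _).add ((hi _).const_mul _)
    | exact (((hi _).const_mul _).add ((hi _).const_mul _)).add ((hi _).const_mul _)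

lemma target_tendsto_zero (k : ℕ) :
    Tendsto (fun z => 1 / (phi z ^ k * sqrtB z)) (cocompact ℂ) (𝓝 0) := by
  have h1 : Tendsto (fun z : ℂ => 1 / √(‖z‖ ^ 2 - 1)) (cocompact ℂ) (𝓝 0) := by
    simp only [one_div]
    apply Tendsto.inv_tendsto_atTop
    apply Real.tendsto_sqrt_atTop.comp
    apply tendsto_atTop_add_const_right
    exact (tendsto_pow_atTop (by norm_num)).comp (tendsto_norm_cocompact_atTop (E := ℂ))
  apply squeeze_zero_norm' _ h1
  filter_upwards [(tendsto_norm_cocompact_atTop (E := ℂ)).eventually_gt_atTop 1] with z hz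
  have hz0 : z ≠ 0 := by rintro rfl; simp at hz; linarith
  have hp : 0 < √(‖z‖ ^ 2 - 1) := Real.sqrt_pos.2 (by nlinarith)
  have hs : √(‖z‖ ^ 2 - 1) ≤ ‖sqrtB z‖ := by
    apply Real.sqrt_le_iff.2 ⟨norm_nonneg _, _⟩
    rw [← norm_pow, ← norm_pow, sqrtB_sq hz0]
    have := norm_sub_norm_le (z^2) 1
    simpa using this
  rw [norm_div, norm_one, norm_mul, norm_pow]
  apply one_div_le_one_div_of_le hp
  exact hs.trans (le_mul_of_one_le_left (norm_nonneg _) (one_le_pow₀ (one_le_phi hz0)))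

lemma near_case {μ : Measure ℝ} [IsFiniteMeasure μ] {l : ℕ → Polynomial ℝ} {a b : ℕ → ℝ}
    (hc : IsCompact (msupp μ)) (hM : IsM01 μ l a b) (z₀ : ℂ) (hz₀ : z₀ ∉ msuppC μ)
    (U : Ultrafilter (ℕ × ℂ)) (hU1 : Tendsto Prod.fst (U : Filter (ℕ × ℂ)) atTop)
    (hU2 : Tendsto Prod.snd (U : Filter (ℕ × ℂ)) (𝓝 z₀)) (ν : ℤ) :
    Tendsto (fun p : ℕ × ℂ => gC μ l ((p.1 : ℤ) + ν).toNat p.1 p.2) U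
      (𝓝 (1 / (phi z₀ ^ ν.natAbs * sqrtB z₀))) ∧
    ContinuousAt (fun z => 1 / (phi z ^ ν.natAbs * sqrtB z)) z₀ := by
  have hcl : IsClosed (msuppC μ) := (hc.image Complex.continuous_ofReal).isClosed
  obtain ⟨e, he, hball⟩ := Metric.isOpen_iff.1 hcl.isOpen_compl z₀ hz₀
  have hd : 0 < e / 2 := by positivity
  have hdist : ∀ᶠ p in (U : Filter (ℕ × ℂ)), ∀ x ∈ msupp μ, e / 2 ≤ ‖p.2 - (x : ℂ)‖ := by
    filter_upwards [hU2.eventually (Metric.ball_mem_nhds z₀ hd)] with p hp x hx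
    by_contra hlt
    push Not at hlt
    refine hball (a := (x:ℂ)) ?_ (mem_image_of_mem _ hx)
    rw [Metric.mem_ball]
    rw [← dist_eq_norm] at hlt
    have := dist_triangle (x:ℂ) p.2 z₀
    rw [dist_comm (x:ℂ) p.2] at this
    linarith
  have hex : ∀ k : ℤ, ∃ G : ℂ,
      Tendsto (fun p : ℕ × ℂ => gC μ l ((p.1 : ℤ) + k).toNat p.1 p.2) U (𝓝 G) := by
    intro k
    have hcp := (isCompact_closedBall (0:ℂ) (1 / (e/2))).ultrafilter_le_nhds
      (U.map (fun p : ℕ × ℂ => gC μ l ((p.1 : ℤ) + k).toNat p.1 p.2)) (by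
        rw [le_principal_iff]
        change ∀ᶠ p in (U : Filter (ℕ × ℂ)), _
        filter_upwards [hdist] with p hp
        simpa using gC_bound hc hM.onp _ p.1 p.2 (e/2) hd hp)
    obtain ⟨G, -, hG⟩ := hcp
    exact ⟨G, hG⟩
  choose G hG using hex
  have hlarge : ∀ k : ℤ, ∀ᶠ p in (U : Filter (ℕ × ℂ)), k ≤ (p.1 : ℤ) := by
    intro k
    filter_upwards [hU1.eventually_ge_atTop k.toNat] with p hp
    omega
  have hG0 : Tendsto G cofinite (𝓝 0) := by
    have hs : Summable (fun k => ‖G k‖ ^ 2) := by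
      apply summable_of_sum_le (c := (1 / (e/2)) ^ 2) (fun k => by positivity)
      intro s
      have ht : Tendsto (fun p : ℕ × ℂ => ∑ k ∈ s, ‖gC μ l ((p.1 : ℤ) + k).toNat p.1 p.2‖ ^ 2) U
          (𝓝 (∑ k ∈ s, ‖G k‖ ^ 2)) := tendsto_finsetSum _ fun k _ => (hG k).norm.pow 2
      apply le_of_tendsto ht
      have hall : ∀ᶠ p in (U : Filter (ℕ × ℂ)), ∀ k ∈ s, -k ≤ (p.1 : ℤ) :=
        (eventually_all_finset s).2 fun k _ => hlarge (-k)
      filter_upwards [hdist, hall] with p hp hp2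
      have hb := bessel hc hM.onp p.1 p.2 (e/2) hd hp (s.image fun k => ((p.1 : ℤ) + k).toNat)
      rw [Finset.sum_image] at hb
      · exact hb
      · intro x hx y hy hxy
        have h1 := hp2 x hx
        have h2 := hp2 y hy
        simp only at hxy
        omega
    have := hs.tendsto_cofinite_zero
    have h2 := (Real.continuous_sqrt.tendsto 0).comp this
    rw [tendsto_zero_iff_norm_tendsto_zero]
    simpa [Function.comp_def, Real.sqrt_sq (norm_nonneg _)] using h2
  have hrec : ∀ k, z₀ * G k - (G (k+1) + G (k-1)) / 2 = if k = 0 then 1 else 0 := by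
    intro k
    have ha : ∀ j : ℤ, Tendsto (fun p : ℕ × ℂ => (a ((p.1 : ℤ) + j).toNat : ℂ)) U (𝓝 (1/2)) := by
      intro j
      have h1 : Tendsto (fun p : ℕ × ℂ => ((p.1 : ℤ) + j).toNat) U atTop := by
        rw [tendsto_atTop]
        intro N
        filter_upwards [hlarge (N - j)] with p hp
        omega
      have := (Complex.continuous_ofReal.tendsto _).comp (hM.tendsto_a.comp h1)
      simpa [Function.comp_def] using this
    have hb : Tendsto (fun p : ℕ × ℂ => (b ((p.1 : ℤ) + k).toNat : ℂ)) U (𝓝 0) := by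
      have h1 : Tendsto (fun p : ℕ × ℂ => ((p.1 : ℤ) + k).toNat) U atTop := by
        rw [tendsto_atTop]
        intro N
        filter_upwards [hlarge (N - k)] with p hp
        omega
      have := (Complex.continuous_ofReal.tendsto _).comp (hM.tendsto_b.comp h1)
      simpa [Function.comp_def] using this
    have ht := (hU2.mul (hG k)).sub ((((ha (k+1)).mul (hG (k+1))).add (hb.mul (hG k))).add
      ((ha k).mul (hG (k-1))))
    have hev : ∀ᶠ p in (U : Filter (ℕ × ℂ)),
        p.2 * gC μ l ((p.1 : ℤ) + k).toNat p.1 p.2 -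
        ((a ((p.1 : ℤ) + (k+1)).toNat : ℂ) * gC μ l ((p.1 : ℤ) + (k+1)).toNat p.1 p.2
          + (b ((p.1 : ℤ) + k).toNat : ℂ) * gC μ l ((p.1 : ℤ) + k).toNat p.1 p.2
          + (a ((p.1 : ℤ) + k).toNat : ℂ) * gC μ l ((p.1 : ℤ) + (k-1)).toNat p.1 p.2)
        = if k = 0 then 1 else 0 := by
      filter_upwards [hdist, hlarge (1 - k)] with p hp hp2
      obtain ⟨m, hm⟩ : ∃ m : ℕ, (p.1 : ℤ) + k = m + 1 := ⟨((p.1:ℤ) + k - 1).toNat, by omega⟩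
      have e1 : ((p.1 : ℤ) + k).toNat = m + 1 := by omega
      have e2 : ((p.1 : ℤ) + (k+1)).toNat = m + 2 := by omega
      have e3 : ((p.1 : ℤ) + (k-1)).toNat = m := by omega
      rw [e1, e2, e3, gC_rec hc hM m p.1 p.2 (e/2) hd hp]
      have : m + 1 = p.1 ↔ k = 0 := by omega
      simp only [this]
    have := tendsto_nhds_unique (ht.congr' hev) tendsto_const_nhds
    rw [← this]; ring
  by_cases hz : z₀ = 0
  · exfalso
    have := (green (w := Complex.I) Complex.I_ne_zero (by simp) (by simp [hz]) G hG0 hrec).1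
    simp at this
  · obtain ⟨h1, h2, h3⟩ := green (w := phi z₀) (phi_ne hz) (one_le_phi hz)
      (by rw [phi_inv hz]; unfold phi; ring) G hG0 hrec
    rw [phi_inv hz, sub_sub_cancel] at h2
    have hs : sqrtB z₀ ≠ 0 := right_ne_zero_of_mul_eq_one h2
    constructor
    · convert hG ν using 2
      rw [h3, eq_one_div_of_mul_eq_one_left h2, inv_pow]
      field_simp
    · have hcs := sqrtB_cont hz h1
      apply ContinuousAt.div continuousAt_const
      · exact ((continuousAt_id.add hcs).pow _).mul hcs
      · exact mul_ne_zero (pow_ne_zero _ (phi_ne hz)) hs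

lemma far_case {μ : Measure ℝ} [IsFiniteMeasure μ] {l : ℕ → Polynomial ℝ}
    (hc : IsCompact (msupp μ)) (hM : IsOrthonormalPolys μ l)
    (U : Filter (ℕ × ℂ))
    (hU2 : Tendsto Prod.snd U (cocompact ℂ)) (ν : ℤ) :
    Tendsto (fun p : ℕ × ℂ => gC μ l ((p.1 : ℤ) + ν).toNat p.1 p.2) U (𝓝 0) := by
  obtain ⟨R, hR⟩ := hc.exists_bound_of_continuousOn (f := fun x : ℝ => x) continuousOn_id
  have hn := (tendsto_norm_cocompact_atTop (E := ℂ)).comp hU2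
  have h1 : Tendsto (fun p : ℕ × ℂ => 1 / (‖p.2‖ - R)) U (𝓝 0) := by
    simp only [one_div]
    apply Tendsto.inv_tendsto_atTop
    exact tendsto_atTop_add_const_right _ _ hn
  apply squeeze_zero_norm' _ h1
  filter_upwards [hn.eventually_gt_atTop R] with p hp
  simp only [Function.comp_apply] at hp
  apply gC_bound hc hM _ _ _ _ (by linarith)
  intro x hx
  have h2 := hR x hx
  have h3 := norm_sub_norm_le p.2 (x:ℂ)
  rw [Complex.norm_real] at h3
  linarith

/-- Lemma 2. For `μ ∈ M(0,1)` and every fixed `ν ∈ ℤ`,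
`∫ l_{n+ν}(x) l_n(x)/(z-x) dμ(x) ⇉ 1/(φ(z)^{|ν|}·√(z²-1))` on compact subsets
of `ℂ̄ ∖ S_μ` (compact subsets of the sphere correspond to closed subsets of
ℂ avoiding S_μ). -/
theorem cauchy_transform_product_asymptotics
    (μ : Measure ℝ) [IsFiniteMeasure μ] (l : ℕ → Polynomial ℝ) (a b : ℕ → ℝ)
    (hcompact : IsCompact (msupp μ)) (hinf : (msupp μ).Infinite)
    (hM01 : IsM01 μ l a b) :
    ∀ ν : ℤ, ∀ F : Set ℂ, IsClosed F → F ⊆ (msuppC μ)ᶜ →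
      TendstoUniformlyOn
        (fun (n : ℕ) (z : ℂ) =>
          ∫ x, ((((l ((n : ℤ) + ν).toNat).eval x * (l n).eval x : ℝ) : ℂ) / (z - x)) ∂μ)
        (fun z => 1 / (phi z ^ ν.natAbs * sqrtB z)) atTop F := by
  intro ν F hF hFS
  rw [tendstoUniformlyOn_iff_tendsto, tendsto_iff_ultrafilter]
  intro U hU
  have hU1 : Tendsto Prod.fst (U : Filter (ℕ × ℂ)) atTop := tendsto_fst.mono_left hU
  have hUF : Tendsto Prod.snd (U : Filter (ℕ × ℂ)) (𝓟 F) := tendsto_snd.mono_left hU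
  by_cases hcc : Tendsto Prod.snd (U : Filter (ℕ × ℂ)) (cocompact ℂ)
  · have h1 := far_case hcompact hM01.onp U hcc ν
    have h2 := (target_tendsto_zero ν.natAbs).comp hcc
    exact (h2.prodMk_nhds h1).mono_right (nhds_le_uniformity 0)
  · obtain ⟨K, hK, hKU⟩ : ∃ K : Set ℂ, IsCompact K ∧ K ∈ U.map Prod.snd := by
      by_contra hno
      push Not at hno
      apply hcc
      intro s hs
      obtain ⟨K, hK, hKs⟩ := mem_cocompact.1 hs
      have := Ultrafilter.compl_mem_iff_notMem.2 (hno K hK)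
      exact mem_of_superset (f := ((U.map Prod.snd : Ultrafilter ℂ) : Filter ℂ)) this hKs
    obtain ⟨z₀, hz₀, hle⟩ := (hK.inter_right hF).ultrafilter_le_nhds (U.map Prod.snd) (by
      rw [le_principal_iff]
      exact inter_mem hKU (hUF (mem_principal_self F)))
    have hU2 : Tendsto Prod.snd (U : Filter (ℕ × ℂ)) (𝓝 z₀) := hle
    obtain ⟨h1, h2⟩ := near_case hcompact hM01 z₀ (hFS hz₀.2) U hU1 hU2 ν
    exact ((h2.tendsto.comp hU2).prodMk_nhds h1).mono_right (nhds_le_uniformity _)
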